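/- arXiv:2001.11609 — 2 statements merged into one kernel-verified Lean document; each statement's English description precedes it below -/
import Mathlib

section
/- Let p be a prime, e > 1, q = p^e, and let H be a normalized generalized Hadamard matrix H(q,λ) over F_q of order n = qλ = p^t such that C_H is F_p-additive. If C_H is a linear code over F_q, then e divides t and rank(C_H) = ker(C_H) = 1 + t/e; otherwise 1 ≤ ker(C_H) ≤ ⌊t/e⌋. -/
/-!
The rows of `H` together with the constants give `|C_H| = n q = p ^ (t + e)`, since rows of a
generalised Hadamard matrix never differ by a constant. Because `C_H` is additive, its kernel is
the largest `F_q`-subspace `K` contained in `C_H`, and `K` contains the constant vectors. If `C_H` is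
linear then `K = C_H`, and counting gives `e * dim K = t + e`.

Otherwise choose `x` in `C_H` but not in `K` and put `W = K + F_q x`. Every codeword of `C_H` is either
constant or balanced (it takes each value exactly `lam` times), and so is each of its scalar
multiples. An element `y + a x` of `W` is a codeword when `a = 0`, and `a` times the codeword
`x + a⁻¹ y` otherwise, so every word of `W` is constant or balanced. For a linear code of
length `n` with this property, `q ^ (dim W) ≤ q n`: fix a coordinate `s₀` and count in two ways the
pairs `(w, s)` with `w s = w s₀` (`card_le_of_constOrBalanced`). As `dim W ≥ dim K + 1`, this yields
`q ^ (dim K) ≤ n = p ^ t`, that is `dim K ≤ t / e`.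
-/

open scoped BigOperators

section Defs

variable {ι : Type*} {F : Type*} [Field F]

/-- `H` is a generalised Hadamard matrix with parameter `lam`: for any two distinct rows,
every difference value is attained exactly `lam` times. -/
def IsGH (lam : ℕ) (H : Matrix ι ι F) : Prop :=
  ∀ i j : ι, i ≠ j → ∀ a : F, Nat.card {s : ι // H i s - H j s = a} = lam

/-- The generalised Hadamard code `C_H` associated to a matrix `H`: the union of all
translates of the rows of `H` by constant vectors. -/
def ghCode (H : Matrix ι ι F) : Set (ι → F) :=
  {v | ∃ (i : ι) (α : F), v = fun s => H i s + α}

/-- The kernel `K(C)` of a code `C`. -/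
def kerSet (C : Set (ι → F)) : Set (ι → F) :=
  {x | ∀ α : F, (fun c => α • x + c) '' C = C}

/-- The `p`-kernel `K_p(C)` of a code `C`. -/
def pkerSet (C : Set (ι → F)) : Set (ι → F) :=
  {x | (fun c => x + c) '' C = C}

end Defs

/-- A matrix is normalized if its first row and first column are identically zero. -/
def IsNormalized {n : ℕ} {F : Type*} [Zero F] (H : Matrix (Fin n) (Fin n) F) : Prop :=
  ∀ i j : Fin n, (i.val = 0 ∨ j.val = 0) → H i j = 0

/-- A code over `GF(p^e)` is `F_p`-additive if it is an `F_p`-linear subspace. -/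
def IsFpAdditive (p : ℕ) [Fact p.Prime] {e : ℕ} {ι : Type*}
    (C : Set (ι → GaloisField p e)) : Prop :=
  ∃ S : Submodule (ZMod p) (ι → GaloisField p e), C = ↑S

/-- The rank of a code: the dimension over `F` of its `F`-linear span. -/
noncomputable def rankC (F : Type*) [Field F] {ι : Type*} (C : Set (ι → F)) : ℕ :=
  Module.finrank F (Submodule.span F C)

/-- The dimension over `F` of the kernel of a code. -/
noncomputable def kerDim (F : Type*) [Field F] {ι : Type*} (C : Set (ι → F)) : ℕ :=
  Module.finrank F (Submodule.span F (kerSet C))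

section Helpers

variable {ι : Type*} {F : Type*} [Field F]

/-- A word which is constant or takes every value of `F` exactly `lam` times. -/
def ConstOrBalanced (lam : ℕ) (w : ι → F) : Prop :=
  (∃ c : F, w = fun _ => c) ∨ ∀ a : F, Nat.card {s : ι // w s = a} = lam

lemma ConstOrBalanced.smul {lam : ℕ} {w : ι → F} (h : ConstOrBalanced lam w) {a : F}
    (ha : a ≠ 0) : ConstOrBalanced lam (a • w) := by
  rcases h with ⟨c, rfl⟩ | h
  · exact Or.inl ⟨a * c, by ext; simp⟩
  · refine Or.inr fun b => ?_
    rw [← h (a⁻¹ * b)]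
    refine Nat.card_congr (Equiv.subtypeEquivRight fun s => ?_)
    rw [Pi.smul_apply, smul_eq_mul, eq_inv_mul_iff_mul_eq₀ ha]

/-- The words of `W` which agree at two given coordinates form the kernel of a linear functional,
so their number is at least `|W| / q`. -/
lemma card_le_card_agree [Finite F] [Finite ι] (W : Submodule F (ι → F)) (s s₀ : ι) :
    Nat.card W ≤ Nat.card F * Nat.card {w : W // w.1 s = w.1 s₀} := by
  classical
  let φ : W →ₗ[F] F :=
    ((LinearMap.proj s : (ι → F) →ₗ[F] F) - LinearMap.proj s₀).comp W.subtype
  have hk : Nat.card {w : W // w.1 s = w.1 s₀} = Nat.card (LinearMap.ker φ) :=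
    Nat.card_congr (Equiv.subtypeEquivRight fun w => by simp [φ, sub_eq_zero])
  have h1 : Module.finrank F (LinearMap.range φ) ≤ 1 := by
    simpa using Submodule.finrank_le (LinearMap.range φ)
  have h2 := LinearMap.finrank_range_add_finrank_ker φ
  rw [hk, Module.natCard_eq_pow_finrank (K := F) (V := W),
    Module.natCard_eq_pow_finrank (K := F) (V := LinearMap.ker φ), ← pow_succ']
  exact Nat.pow_le_pow_right Nat.card_pos (by omega)

/-- A linear code all of whose words are constant or balanced has at most `q n` words. -/
lemma card_le_of_constOrBalanced [Finite F] [Fintype ι] [Nonempty ι] {lam : ℕ}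
    (hn : Fintype.card ι = Nat.card F * lam) (W : Submodule F (ι → F))
    (hW : ∀ w ∈ W, ConstOrBalanced lam w) :
    Nat.card W ≤ Nat.card F * Fintype.card ι := by
  classical
  have := Fintype.ofFinite F
  have := Fintype.ofFinite W
  obtain ⟨s₀⟩ := ‹Nonempty ι›
  set q := Nat.card F with hq
  set n := Fintype.card ι
  set Q := Nat.card W with hQ
  have hq1 : 1 < q := Finite.one_lt_card
  have hn1 : 1 ≤ n := Fintype.card_pos_iff.mpr ⟨s₀⟩
  -- Double count of the pairs `(w, s)` with `w s = w s₀`.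
  have hdc : ∑ s : ι, Nat.card {w : W // w.1 s = w.1 s₀}
      = ∑ w : W, Nat.card {s : ι // w.1 s = w.1 s₀} := by
    simp only [Nat.card_eq_fintype_card, Fintype.card_subtype, Finset.card_filter]
    exact Finset.sum_comm
  have hlow : q * Q + (n - 1) * Q ≤ q * ∑ s : ι, Nat.card {w : W // w.1 s = w.1 s₀} := by
    rw [← Finset.add_sum_erase _ _ (Finset.mem_univ s₀), mul_add, Finset.mul_sum]
    refine add_le_add (le_of_eq ?_) ?_
    · simp [hQ]
    · have := Finset.card_nsmul_le_sum (Finset.univ.erase s₀)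
        (fun s => q * Nat.card {w : W // w.1 s = w.1 s₀}) Q
        (fun s _ => card_le_card_agree W s s₀)
      simpa [Finset.card_erase_of_mem, Finset.card_univ] using this
  have hconst : (Finset.univ.filter fun w : W => ∃ c : F, w.1 = fun _ => c).card ≤ q := by
    rw [hq, Nat.card_eq_fintype_card, ← Finset.card_univ]
    refine Finset.card_le_card_of_injOn (fun w => w.1 s₀) (fun _ _ => Finset.mem_univ _) ?_
    intro w hw w' hw' h
    simp only [Finset.coe_filter, Finset.mem_univ, true_and, Set.mem_ofPred_eq] at hw hw'
    obtain ⟨c, hc⟩ := hw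
    obtain ⟨c', hc'⟩ := hw'
    apply Subtype.ext
    simp only [hc, hc'] at h ⊢
    rw [h]
  have hup : q * ∑ w : W, Nat.card {s : ι // w.1 s = w.1 s₀} ≤ Q * n + q * ((q - 1) * n) := by
    calc q * ∑ w : W, Nat.card {s : ι // w.1 s = w.1 s₀}
        ≤ ∑ w : W, (n + if (∃ c : F, w.1 = fun _ => c) then (q - 1) * n else 0) := by
          rw [Finset.mul_sum]
          refine Finset.sum_le_sum fun w _ => ?_
          split_ifs with h
          · have h1 : Nat.card {s : ι // w.1 s = w.1 s₀} ≤ n := by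
              rw [Nat.card_eq_fintype_card]
              exact Fintype.card_subtype_le _
            obtain ⟨r, hr⟩ : ∃ r, q = r + 1 := ⟨q - 1, by omega⟩
            calc q * _ ≤ q * n := Nat.mul_le_mul_left _ h1
              _ = n + (q - 1) * n := by rw [hr, Nat.add_sub_cancel]; ring
          · have h1 := (hW w.1 w.2).resolve_left h (w.1 s₀)
            rw [h1, ← hn, add_zero]
      _ ≤ Q * n + q * ((q - 1) * n) := by
          rw [Finset.sum_add_distrib, ← Finset.sum_filter, Finset.sum_const, Finset.sum_const,
            Finset.card_univ, smul_eq_mul, smul_eq_mul, hQ, Nat.card_eq_fintype_card]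
          exact Nat.add_le_add_left (Nat.mul_le_mul_right _ hconst) _
  rw [hdc] at hlow
  have h := hlow.trans hup
  obtain ⟨r, hr⟩ : ∃ r, q = r + 2 := ⟨q - 2, by omega⟩
  obtain ⟨m, hm⟩ : ∃ m, n = m + 1 := ⟨n - 1, by omega⟩
  rw [hr, hm] at h ⊢
  simp only [Nat.add_sub_cancel, show r + 2 - 1 = r + 1 by omega] at h
  have h3 : (r + 1) * Q ≤ (r + 1) * ((r + 2) * (m + 1)) := by nlinarith
  exact Nat.le_of_mul_le_mul_left h3 (by omega)

lemma constOrBalanced_of_mem_ghCode {lam : ℕ} {H : Matrix ι ι F} (hGH : IsGH lam H) {i₀ : ι}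
    (h0 : ∀ s, H i₀ s = 0) {w : ι → F} (hw : w ∈ ghCode H) : ConstOrBalanced lam w := by
  obtain ⟨i, α, rfl⟩ := hw
  by_cases hi : i = i₀
  · subst hi
    exact Or.inl ⟨α, by simp [h0]⟩
  · refine Or.inr fun a => ?_
    rw [← hGH i i₀ hi (a - α)]
    refine Nat.card_congr (Equiv.subtypeEquivRight fun s => ?_)
    rw [h0, sub_zero, eq_sub_iff_add_eq]

/-- The parametrisation of `C_H` by a row and a constant is injective, because a constant
difference of two distinct rows would omit the values other than that constant. -/
lemma card_ghCode {lam : ℕ} (hlam : 0 < lam) {H : Matrix ι ι F} (hGH : IsGH lam H) :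
    Nat.card (ghCode H) = Nat.card ι * Nat.card F := by
  rw [← Nat.card_prod]
  refine (Nat.card_congr (Equiv.ofBijective
    (fun x : ι × F => (⟨fun s => H x.1 s + x.2, x.1, x.2, rfl⟩ : ghCode H)) ⟨?_, ?_⟩)).symm
  · rintro ⟨i, α⟩ ⟨j, β⟩ h
    have h' : ∀ s, H i s + α = H j s + β := fun s => congrFun (congrArg Subtype.val h) s
    by_cases hij : i = j
    · subst hij
      have hne : Nonempty ι := ⟨i⟩
      obtain ⟨s⟩ := hne
      rw [add_left_cancel (h' s)]
    · exfalso
      -- The value `β - α + 1` is not attained by the constant difference `β - α`.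
      have h1 := hGH i j hij (β - α + 1)
      have : IsEmpty {s : ι // H i s - H j s = β - α + 1} := by
        refine ⟨fun ⟨s, hs⟩ => one_ne_zero (α := F) ?_⟩
        linear_combination h' s - hs
      rw [Nat.card_of_isEmpty] at h1
      omega
  · rintro ⟨_, i, α, rfl⟩
    exact ⟨(i, α), rfl⟩

lemma mem_kerSet_iff {C : Set (ι → F)} (S : AddSubgroup (ι → F)) (hS : C = S) (x : ι → F) :
    x ∈ kerSet C ↔ ∀ α : F, α • x ∈ C := by
  subst hS
  constructor
  · intro h α
    have : α • x + 0 ∈ (fun c => α • x + c) '' (S : Set (ι → F)) := ⟨0, S.zero_mem, rfl⟩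
    rwa [h α, add_zero] at this
  · intro h α
    ext v
    constructor
    · rintro ⟨c, hc, rfl⟩
      exact S.add_mem (h α) hc
    · intro hv
      exact ⟨-(α • x) + v, S.add_mem (S.neg_mem (h α)) hv, by simp⟩

/-- The kernel of an additive code, as the largest linear subspace contained in the code. -/
def kerSubmodule (S : AddSubgroup (ι → F)) : Submodule F (ι → F) where
  carrier := {x | ∀ α : F, α • x ∈ S}
  zero_mem' := fun α => by simp [S.zero_mem]
  add_mem' := fun hx hy α => by
    rw [smul_add]
    exact S.add_mem (hx α) (hy α)
  smul_mem' := fun c x hx α => by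
    rw [smul_smul]
    exact hx _

end Helpers

theorem stmt4 (p e lam n t : ℕ) [Fact p.Prime] (he : 1 < e)
    (hn : n = p ^ e * lam) (hnt : n = p ^ t)
    (H : Matrix (Fin n) (Fin n) (GaloisField p e))
    (hGH : IsGH lam H) (hnorm : IsNormalized H)
    (hadd : IsFpAdditive p (ghCode H)) :
    ((∃ S : Submodule (GaloisField p e) (Fin n → GaloisField p e), ghCode H = ↑S) →
      e ∣ t ∧ rankC (GaloisField p e) (ghCode H) = 1 + t / e ∧
        kerDim (GaloisField p e) (ghCode H) = 1 + t / e) ∧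
    (¬ (∃ S : Submodule (GaloisField p e) (Fin n → GaloisField p e), ghCode H = ↑S) →
      1 ≤ kerDim (GaloisField p e) (ghCode H) ∧
        kerDim (GaloisField p e) (ghCode H) ≤ t / e) := by
  have hp : p.Prime := Fact.out
  have hn0 : 0 < n := hnt ▸ pow_pos hp.pos t
  have hlam : 0 < lam := Nat.pos_of_ne_zero (by rintro rfl; simp at hn; omega)
  have hqc : Nat.card (GaloisField p e) = p ^ e := GaloisField.card p e (by omega)
  have hfin : Finite (GaloisField p e) :=
    Nat.finite_of_card_ne_zero (by rw [hqc]; exact pow_ne_zero _ hp.ne_zero)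
  have hne : Nonempty (Fin n) := ⟨⟨0, hn0⟩⟩
  have h0 : ∀ s, H ⟨0, hn0⟩ s = 0 := fun s => hnorm _ _ (Or.inl rfl)
  have hcard : Nat.card (ghCode H) = p ^ (t + e) := by
    rw [card_ghCode hlam hGH, hqc, Nat.card_fin, hnt, pow_add]
  obtain ⟨S', hS'⟩ := hadd
  have hS : ghCode H = (S'.toAddSubgroup : Set (Fin n → GaloisField p e)) := hS'
  generalize S'.toAddSubgroup = S at hS
  have hker : kerSet (ghCode H) = (kerSubmodule S : Set (Fin n → GaloisField p e)) := by
    ext x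
    rw [mem_kerSet_iff S hS, hS]
    rfl
  have hkd : kerDim (GaloisField p e) (ghCode H)
      = Module.finrank (GaloisField p e) (kerSubmodule S) := by
    rw [kerDim, hker, Submodule.span_eq]
  have hKC : ∀ x ∈ kerSubmodule S, x ∈ S := fun x hx => by
    have := hx 1
    rwa [one_smul] at this
  constructor
  · rintro ⟨T, hT⟩
    have hKT : kerSubmodule S = T := by
      apply SetLike.coe_injective
      rw [← hker]
      ext x
      rw [mem_kerSet_iff S hS, hT]
      exact ⟨fun h => by simpa using h 1, fun h α => T.smul_mem α h⟩
    have hr : rankC (GaloisField p e) (ghCode H) = Module.finrank (GaloisField p e) T := by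
      rw [rankC, hT, Submodule.span_eq]
    rw [hkd, hr, hKT]
    have h1 : Nat.card T = p ^ (t + e) := by
      rw [← hcard, hT]
      rfl
    rw [Module.natCard_eq_pow_finrank (K := GaloisField p e), hqc, ← pow_mul] at h1
    have h2 := Nat.pow_right_injective hp.two_le h1
    generalize Module.finrank (GaloisField p e) T = k at h2
    obtain ⟨j, rfl⟩ : ∃ j, k = j + 1 :=
      Nat.exists_eq_succ_of_ne_zero (by rintro rfl; omega)
    have h3 : t = e * j := by rw [mul_add] at h2; omega
    have h4 : t / e = j := by rw [h3, Nat.mul_div_cancel_left _ (by omega)]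
    exact ⟨⟨j, h3⟩, by omega, by omega⟩
  · intro hlin
    rw [hkd]
    have hconst : ∀ c : GaloisField p e, (fun _ => c : Fin n → GaloisField p e) ∈ S := by
      intro c
      rw [← SetLike.mem_coe, ← hS]
      exact ⟨⟨0, hn0⟩, c, by simp [h0]⟩
    constructor
    · have h1 : (fun _ => 1 : Fin n → GaloisField p e) ∈ kerSubmodule S := by
        intro α
        convert hconst α using 1
        ext
        simp
      rw [Nat.one_le_iff_ne_zero, Ne, Submodule.finrank_eq_zero]
      intro hb
      rw [hb, Submodule.mem_bot] at h1
      exact one_ne_zero (congrFun h1 ⟨0, hn0⟩)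
    · obtain ⟨x, hxS, hxK⟩ : ∃ x ∈ S, x ∉ kerSubmodule S := by
        by_contra! hcon
        exact hlin ⟨kerSubmodule S, by
          rw [hS]
          exact Set.Subset.antisymm hcon hKC⟩
      let W := kerSubmodule S ⊔ Submodule.span (GaloisField p e) {x}
      have hgood : ∀ w ∈ S, ConstOrBalanced lam w := fun w hw =>
        constOrBalanced_of_mem_ghCode hGH h0 (by rw [hS]; exact hw)
      have hW : ∀ w ∈ W, ConstOrBalanced lam w := by
        intro w hw
        obtain ⟨y, hy, z, hz, rfl⟩ := Submodule.mem_sup.mp hw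
        obtain ⟨a, rfl⟩ := Submodule.mem_span_singleton.mp hz
        by_cases ha : a = 0
        · rw [ha, zero_smul, add_zero]
          exact hgood y (hKC y hy)
        · have h := (hgood _ (S.add_mem (hy a⁻¹) hxS)).smul ha
          rwa [smul_add, smul_inv_smul₀ ha] at h
      have hlt : kerSubmodule S < W := by
        refine lt_of_le_of_ne le_sup_left fun h => hxK ?_
        rw [h]
        exact Submodule.mem_sup_right (Submodule.mem_span_singleton_self x)
      have hrk := Submodule.finrank_lt_finrank_of_lt hlt
      have hb := card_le_of_constOrBalanced (by rw [hqc, Fintype.card_fin, hn]) W hW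
      rw [Module.natCard_eq_pow_finrank (K := GaloisField p e), hqc, Fintype.card_fin,
        ← pow_mul] at hb
      replace hb := hb.trans_eq (congrArg (p ^ e * ·) hnt)
      simp only [← pow_add] at hb
      have hle := (Nat.pow_le_pow_iff_right hp.one_lt).mp hb
      rw [Nat.le_div_iff_mul_le (by omega)]
      have := Nat.mul_le_mul_left e hrk
      rw [Nat.mul_succ] at this
      rw [mul_comm]
      omega
end

section
/- For every prime p and all integers t > e > 1, setting q = p^e, there exists a normalized generalized Hadamard matrix H(p^e, p^{t−e}) over F_q (of order p^t) such that the GH code C_H is an F_p-additive code of length n = p^t with ker(C_H) = 1 and rank(C_H) = t + 1. -/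
/-!
Let `L = 𝔽_{p^t} = 𝔽_p(a)` and `F = 𝔽_{p^e} = 𝔽_p(ω)`, and let `f` be the minimal polynomial of
`a`, of degree `t`. Let `π : L → F` be the `𝔽_p`-linear map with `π(a^i) = ω^i` for `i < t`, that is,
"reduce modulo `f`, then evaluate at `ω`". It is surjective because `e ≤ t`. Index rows and columns
by `L` and put `H(x, y) = π(x y)`. For `x ≠ 0` the map `y ↦ π(x y)` is linear and surjective, so all
its fibres have `p^{t-e}` elements; hence `H` is a generalised Hadamard matrix, and its code is
visibly additive.

Rank and kernel follow from the twisted relation `π(a y) = ω π(y) - τ(y) f(ω)`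
(`evalMap_gen_mul`), where `τ(y)` is the coefficient of `a^{t-1}` in `y`, and `f(ω) ≠ 0` because
`t > e`. Any `F`-linear relation `∑ c_i π(x_i y) = 0`, valid for all `y`, therefore gives
`∑ c_i τ(x_i y) = 0` for all `y` (`sum_top_eq_zero`). As `(x, y) ↦ τ(x y)` is a nondegenerate
`𝔽_p`-bilinear form on `L`, the functions `π(b_i ·)`, for `b_i` a basis of `L`, are linearly
independent over `F`; with the constants they span a space of dimension `t + 1`. Likewise, if
`c π(x ·) = π(x' ·)` with `x ≠ 0`, then `c τ(x y) = τ(x' y)` for all `y`, which forces `c ∈ 𝔽_p`;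
since `e > 1` some `c ∈ F` lies outside `𝔽_p`, so the kernel consists of the constants only.
-/

open scoped BigOperators

/-! ### Evaluation at `ω` in a power basis -/

section EvalMap

variable {K L F : Type*} [Field K] [Field L] [Field F] [Algebra K L] [Algebra K F]

/-- The `K`-linear map `L → F` sending `gen ^ i` to `ω ^ i` for `i < dim`: write an element as a
polynomial of degree `< dim` in the generator and evaluate that polynomial at `ω`. -/
noncomputable def evalMap (pb : PowerBasis K L) (ω : F) : L →ₗ[K] F :=
  pb.basis.constr K (fun i => ω ^ (i : ℕ))

/-- The coefficient of `gen ^ (dim - 1)` in the power basis expansion. -/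
noncomputable def topCoeff (pb : PowerBasis K L) : L →ₗ[K] K :=
  pb.basis.coord ⟨pb.dim - 1, Nat.sub_lt pb.dim_pos one_pos⟩

lemma evalMap_gen_pow (pb : PowerBasis K L) (ω : F) (i : ℕ) (hi : i < pb.dim) :
    evalMap pb ω (pb.gen ^ i) = ω ^ i := by
  have h := pb.basis.constr_basis K (fun i => ω ^ (i : ℕ)) ⟨i, hi⟩
  rw [pb.basis_eq_pow] at h
  exact h

lemma topCoeff_gen_pow (pb : PowerBasis K L) (i : ℕ) (hi : i < pb.dim) :
    topCoeff pb (pb.gen ^ i) = if i = pb.dim - 1 then 1 else 0 := by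
  have h : pb.gen ^ i = pb.basis ⟨i, hi⟩ := by rw [pb.basis_eq_pow]
  rw [h, topCoeff, Module.Basis.coord_apply, Module.Basis.repr_self, Finsupp.single_apply]
  simp [Fin.ext_iff]

/-- Multiplication by the generator corresponds under `evalMap` to multiplication by `ω`, up to the
correction coming from one reduction modulo the minimal polynomial. -/
lemma evalMap_gen_mul (pb : PowerBasis K L) (ω : F) (y : L) :
    evalMap pb ω (pb.gen * y) =
      ω * evalMap pb ω y - topCoeff pb y • Polynomial.aeval ω (minpoly K pb.gen) := by
  have key : (evalMap pb ω) ∘ₗ LinearMap.mulLeft K pb.gen =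
      LinearMap.mulLeft K ω ∘ₗ evalMap pb ω -
        (topCoeff pb).smulRight (Polynomial.aeval ω (minpoly K pb.gen)) := by
    refine pb.basis.ext fun i => ?_
    rw [pb.basis_eq_pow]
    simp only [LinearMap.comp_apply, LinearMap.mulLeft_apply, LinearMap.sub_apply,
      LinearMap.smulRight_apply]
    rw [evalMap_gen_pow pb ω i i.2, topCoeff_gen_pow pb i i.2, ← pow_succ', ← pow_succ']
    split_ifs with h
    · have hd : (i : ℕ) + 1 = pb.dim := by have := i.2; omega
      have hm : (minpoly K pb.gen).Monic := minpoly.monic pb.isIntegral_gen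
      have hn : (minpoly K pb.gen).natDegree = pb.dim := pb.natDegree_minpoly
      have hc : (minpoly K pb.gen).coeff pb.dim = 1 := hn ▸ hm.coeff_natDegree
      have h0 := minpoly.aeval K pb.gen
      rw [Polynomial.aeval_eq_sum_range, hn, Finset.sum_range_succ, hc, one_smul] at h0
      rw [Polynomial.aeval_eq_sum_range, hn, Finset.sum_range_succ, hc, hd,
        eq_neg_of_add_eq_zero_right h0, map_neg, map_sum, one_smul, one_smul]
      have hs : ∀ k ∈ Finset.range pb.dim,
          evalMap pb ω ((minpoly K pb.gen).coeff k • pb.gen ^ k) =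
            (minpoly K pb.gen).coeff k • ω ^ k := fun k hk => by
        rw [map_smul, evalMap_gen_pow pb ω k (Finset.mem_range.1 hk)]
      rw [Finset.sum_congr rfl hs]
      ring
    · rw [evalMap_gen_pow pb ω _ (by have := i.2; omega), zero_smul, sub_zero]
  exact LinearMap.congr_fun key y

lemma exists_topCoeff_mul_eq_one (pb : PowerBasis K L) {x : L} (hx : x ≠ 0) :
    ∃ y, topCoeff pb (x * y) = 1 :=
  ⟨x⁻¹ * pb.gen ^ (pb.dim - 1), by
    rw [mul_inv_cancel_left₀ hx, topCoeff_gen_pow pb _ (Nat.sub_lt pb.dim_pos one_pos),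
      if_pos rfl]⟩

/-- An `F`-linear relation between the functions `π(x i * ·)` holds for the functions
`topCoeff (x i * ·)` too: compare the relation at `gen * y` with `ω` times the relation at `y`. -/
lemma sum_top_eq_zero (pb : PowerBasis K L) (ω : F)
    (hω : Polynomial.aeval ω (minpoly K pb.gen) ≠ 0) {ι : Type*} [Fintype ι] (c : ι → F)
    (x : ι → L) (h : ∀ y, ∑ i, c i * evalMap pb ω (x i * y) = 0) (y : L) :
    ∑ i, topCoeff pb (x i * y) • c i = 0 := by
  have h1 := h (pb.gen * y)
  have h2 := h y
  simp_rw [mul_left_comm _ pb.gen, evalMap_gen_mul, Algebra.smul_def, mul_sub,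
    Finset.sum_sub_distrib] at h1
  have h3 : ∑ i, c i * (ω * evalMap pb ω (x i * y)) = 0 := by
    simp_rw [mul_left_comm _ ω, ← Finset.mul_sum, h2, mul_zero]
  rw [h3, zero_sub, neg_eq_zero] at h1
  simp_rw [← mul_assoc, ← Finset.sum_mul] at h1
  rcases mul_eq_zero.1 h1 with h4 | h4
  · simpa [Algebra.smul_def, mul_comm] using h4
  · exact absurd h4 hω

lemma evalMap_surjective (pb : PowerBasis K L) (pb' : PowerBasis K F) (hd : pb'.dim ≤ pb.dim) :
    Function.Surjective (evalMap pb pb'.gen) := by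
  rw [← LinearMap.range_eq_top, eq_top_iff, ← pb'.basis.span_eq, Submodule.span_le]
  rintro _ ⟨i, rfl⟩
  refine ⟨pb.gen ^ (i : ℕ), ?_⟩
  rw [evalMap_gen_pow pb _ _ (i.2.trans_le hd), pb'.basis_eq_pow]

/-- An `F`-multiple of the row of a nonzero `x` can be a row again only for scalars in `K`. -/
lemma scalar_mem_base (pb : PowerBasis K L) (ω : F)
    (hω : Polynomial.aeval ω (minpoly K pb.gen) ≠ 0) (c : F) {x x' : L} (hx : x ≠ 0)
    (h : ∀ y, c * evalMap pb ω (x * y) = evalMap pb ω (x' * y)) :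
    c ∈ Set.range (algebraMap K F) := by
  obtain ⟨y, hy⟩ := exists_topCoeff_mul_eq_one pb hx
  have h1 := sum_top_eq_zero pb ω hω ![c, -1] ![x, x'] (fun z => by simp [h z]) y
  simp only [Fin.sum_univ_two, Matrix.cons_val_zero, Matrix.cons_val_one, hy, one_smul, smul_neg]
    at h1
  refine ⟨topCoeff pb (x' * y), ?_⟩
  rw [Algebra.algebraMap_eq_smul_one]
  exact (add_neg_eq_zero.1 h1).symm

/-- The bilinear form `(x, y) ↦ topCoeff (x * y)` is nondegenerate, so a basis has a dual one. -/
lemma exists_dual_family [FiniteDimensional K L] (pb : PowerBasis K L) :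
    ∃ d : Fin pb.dim → L, ∀ i j,
      topCoeff pb (pb.basis i * d j) = if i = j then 1 else 0 := by
  let T : L →ₗ[K] Module.Dual K L := (LinearMap.mul K L).compr₂ (topCoeff pb)
  have hT : ∀ x y, T x y = topCoeff pb (x * y) := fun _ _ => rfl
  have hinj : Function.Injective T := by
    rw [injective_iff_map_eq_zero]
    intro x hx
    by_contra hne
    obtain ⟨y, hy⟩ := exists_topCoeff_mul_eq_one pb hne
    rw [← hT, hx] at hy
    exact zero_ne_one hy
  have hsurj : Function.Surjective T :=
    (LinearMap.injective_iff_surjective_of_finrank_eq_finrank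
      Subspace.dual_finrank_eq.symm).1 hinj
  choose d hd using fun j => hsurj (pb.basis.coord j)
  refine ⟨d, fun i j => ?_⟩
  rw [mul_comm, ← hT, hd, Module.Basis.coord_apply, Module.Basis.repr_self, Finsupp.single_apply]

end EvalMap

/-! ### Finite fields -/

/-- Every fibre is a translate of the kernel, whose dimension is given by rank-nullity. -/
lemma card_fiber (p : ℕ) [Fact p.Prime] {V W : Type*} [AddCommGroup V] [AddCommGroup W]
    [Module (ZMod p) V] [Module (ZMod p) W] [Finite V] (φ : V →ₗ[ZMod p] W)
    (hφ : Function.Surjective φ) (a : W) :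
    Nat.card {v : V // φ v = a} =
      p ^ (Module.finrank (ZMod p) V - Module.finrank (ZMod p) W) := by
  obtain ⟨v₀, rfl⟩ := hφ a
  have e : {v : V // φ v = φ v₀} ≃ LinearMap.ker φ :=
    { toFun := fun v => ⟨v - v₀, by simp [v.2]⟩
      invFun := fun w => ⟨w + v₀, by simp⟩
      left_inv := fun v => by simp
      right_inv := fun w => by simp }
  have h := φ.finrank_range_add_finrank_ker
  rw [LinearMap.range_eq_top.2 hφ, finrank_top] at h
  rw [Nat.card_congr e, Module.natCard_eq_pow_finrank (K := ZMod p), Nat.card_zmod, ← h,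
    Nat.add_sub_cancel_left]

lemma exists_powerBasis (p n : ℕ) [Fact p.Prime] (hn : n ≠ 0) :
    ∃ pb : PowerBasis (ZMod p) (GaloisField p n), pb.dim = n := by
  refine ⟨Field.powerBasisOfFiniteOfSeparable _ _, ?_⟩
  rw [← PowerBasis.finrank, GaloisField.finrank p hn]

/-! ### The code of the matrix `π(x y)` -/

section Code

variable {K L F ι : Type*} [Field K] [Field L] [Field F] [Algebra K L] [Algebra K F]

/-- The matrix `π(x y)`, with rows and columns labelled by the elements of `L` through `ε`. -/
noncomputable def mulMatrix (pb : PowerBasis K L) (ω : F) (ε : ι ≃ L) : Matrix ι ι F :=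
  fun i j => evalMap pb ω (ε i * ε j)

lemma mem_ghCode_mulMatrix (pb : PowerBasis K L) (ω : F) (ε : ι ≃ L) (v : ι → F) :
    v ∈ ghCode (mulMatrix pb ω ε) ↔
      ∃ (x : L) (α : F), v = fun s => evalMap pb ω (x * ε s) + α := by
  constructor
  · rintro ⟨i, α, rfl⟩
    exact ⟨ε i, α, rfl⟩
  · rintro ⟨x, α, rfl⟩
    exact ⟨ε.symm x, α, by simp [mulMatrix]⟩

/-- The parametrisation `(x, α) ↦ π(x ·) + α` of the code. -/
noncomputable def codeMap (pb : PowerBasis K L) (ω : F) (ε : ι ≃ L) : L × F →ₗ[K] (ι → F) where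
  toFun xa := fun s => evalMap pb ω (xa.1 * ε s) + xa.2
  map_add' x y := by
    funext s
    simp only [Prod.fst_add, Prod.snd_add, add_mul, map_add, Pi.add_apply]
    ring
  map_smul' c x := by
    funext s
    simp

lemma ghCode_mulMatrix_eq_range (pb : PowerBasis K L) (ω : F) (ε : ι ≃ L) :
    ghCode (mulMatrix pb ω ε) = (LinearMap.range (codeMap pb ω ε) : Set (ι → F)) := by
  ext v
  rw [mem_ghCode_mulMatrix]
  constructor
  · rintro ⟨x, α, rfl⟩
    exact ⟨(x, α), rfl⟩
  · rintro ⟨⟨x, α⟩, rfl⟩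
    exact ⟨x, α, rfl⟩

lemma kerSet_mulMatrix (pb : PowerBasis K L) (ω : F)
    (hω : Polynomial.aeval ω (minpoly K pb.gen) ≠ 0) (ε : ι ≃ L) (c : F)
    (hc : c ∉ Set.range (algebraMap K F)) :
    kerSet (ghCode (mulMatrix pb ω ε)) =
      ((Submodule.span F {fun _ : ι => (1 : F)} : Submodule F (ι → F)) : Set (ι → F)) := by
  ext v
  rw [SetLike.mem_coe, Submodule.mem_span_singleton]
  constructor
  · intro hv
    have h0 : (0 : ι → F) ∈ ghCode (mulMatrix pb ω ε) :=
      (mem_ghCode_mulMatrix pb ω ε _).2 ⟨0, 0, by funext s; simp⟩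
    have hmem : ∀ α : F, α • v ∈ ghCode (mulMatrix pb ω ε) := fun α => by
      rw [← hv α]
      exact ⟨0, h0, by simp⟩
    obtain ⟨x, β, hx⟩ := (mem_ghCode_mulMatrix pb ω ε _).1 (hmem 1)
    obtain ⟨x', β', hx'⟩ := (mem_ghCode_mulMatrix pb ω ε _).1 (hmem c)
    rw [one_smul] at hx
    have hy : ∀ y, c * (evalMap pb ω (x * y) + β) = evalMap pb ω (x' * y) + β' := fun y => by
      have h := congrFun hx' (ε.symm y)
      simpa [hx] using h
    have hβ : c * β = β' := by simpa using hy 0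
    have hx0 : x = 0 := by
      by_contra hne
      exact hc (scalar_mem_base pb ω hω c hne (x' := x') fun y => by
        have h := hy y
        rw [mul_add, hβ] at h
        exact add_right_cancel h)
    refine ⟨β, ?_⟩
    rw [hx, hx0]
    funext s
    simp
  · rintro ⟨β, rfl⟩ α
    -- Translating by a constant permutes the code, the inverse being translation by its opposite.
    have htr : ∀ γ : F, ∀ w ∈ ghCode (mulMatrix pb ω ε),
        (fun s => γ + w s) ∈ ghCode (mulMatrix pb ω ε) := by
      rintro γ w ⟨i, δ, rfl⟩
      exact ⟨i, δ + γ, by funext s; ring⟩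
    ext w
    constructor
    · rintro ⟨u, hu, rfl⟩
      convert htr (α * β) u hu using 1
      funext s
      simp
    · intro hw
      refine ⟨_, htr (-(α * β)) w hw, ?_⟩
      funext s
      simp

lemma rankC_mulMatrix [FiniteDimensional K L] (pb : PowerBasis K L) (ω : F)
    (hω : Polynomial.aeval ω (minpoly K pb.gen) ≠ 0) (ε : ι ≃ L) :
    rankC F (ghCode (mulMatrix pb ω ε)) = pb.dim + 1 := by
  -- The constant function together with the rows of a basis of `L`.
  let b : Option (Fin pb.dim) → ι → F := fun o =>
    o.elim (fun _ => 1) (fun i s => evalMap pb ω (pb.basis i * ε s))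
  have hli : LinearIndependent F b := by
    rw [Fintype.linearIndependent_iff]
    intro g hg
    have hy : ∀ y, g none + ∑ i, g (some i) * evalMap pb ω (pb.basis i * y) = 0 := fun y => by
      have h := congrFun hg (ε.symm y)
      simpa [b, Fintype.sum_option] using h
    have h0 : g none = 0 := by simpa using hy 0
    obtain ⟨d, hd⟩ := exists_dual_family pb
    rintro (_ | j)
    · exact h0
    · have h1 := sum_top_eq_zero pb ω hω (fun i => g (some i)) pb.basis
        (fun y => by simpa [h0] using hy y) (d j)
      simpa only [hd, ite_smul, one_smul, zero_smul, Finset.sum_ite_eq', Finset.mem_univ,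
        if_true] using h1
  have hspan : Submodule.span F (ghCode (mulMatrix pb ω ε)) = Submodule.span F (Set.range b) := by
    apply le_antisymm <;> rw [Submodule.span_le]
    · intro v hv
      obtain ⟨x, α, rfl⟩ := (mem_ghCode_mulMatrix pb ω ε _).1 hv
      have h : (fun s => evalMap pb ω (x * ε s) + α) =
          ∑ i, algebraMap K F (pb.basis.repr x i) • b (some i) + α • b none := by
        funext s
        conv_lhs => rw [← pb.basis.sum_repr x]
        simp [b, Finset.sum_mul, -PowerBasis.coe_basis, -Module.Basis.sum_repr]
      rw [h]
      exact add_mem (sum_mem fun i _ => Submodule.smul_mem _ _ (Submodule.subset_span ⟨_, rfl⟩))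
        (Submodule.smul_mem _ _ (Submodule.subset_span ⟨_, rfl⟩))
    · rintro _ ⟨_ | i, rfl⟩
      · exact Submodule.subset_span ((mem_ghCode_mulMatrix pb ω ε _).2 ⟨0, 1, by
          funext s; simp [b]⟩)
      · exact Submodule.subset_span ((mem_ghCode_mulMatrix pb ω ε _).2 ⟨pb.basis i, 0, by
          funext s; simp [b]⟩)
  rw [rankC, hspan, finrank_span_eq_card hli]
  simp

end Code

theorem stmt10 (p e t : ℕ) [Fact p.Prime] (he : 1 < e) (ht : e < t) :
    ∃ H : Matrix (Fin (p ^ t)) (Fin (p ^ t)) (GaloisField p e),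
      IsGH (p ^ (t - e)) H ∧ IsNormalized H ∧ IsFpAdditive p (ghCode H) ∧
      kerDim (GaloisField p e) (ghCode H) = 1 ∧
      rankC (GaloisField p e) (ghCode H) = t + 1 := by
  classical
  obtain ⟨pb, hpb⟩ := exists_powerBasis p t (by omega)
  obtain ⟨pb', hpb'⟩ := exists_powerBasis p e (by omega)
  have hfe := GaloisField.finrank p (n := e) (by omega)
  have hft := GaloisField.finrank p (n := t) (by omega)
  have : Fintype (GaloisField p t) := Fintype.ofFinite _
  have hpos : 0 < p ^ t := pow_pos (Fact.out : p.Prime).pos t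
  obtain ⟨ε₀⟩ : Nonempty (Fin (p ^ t) ≃ GaloisField p t) := by
    rw [← Fintype.card_eq, Fintype.card_fin, ← Nat.card_eq_fintype_card,
      GaloisField.card p t (by omega)]
  -- Shift the labelling so that the first row and column carry the label `0`.
  let ε : Fin (p ^ t) ≃ GaloisField p t := ε₀.trans (Equiv.subRight (ε₀ ⟨0, hpos⟩))
  have hε : ∀ i : Fin (p ^ t), i.val = 0 → ε i = 0 := fun i hi => by
    have : i = ⟨0, hpos⟩ := Fin.ext hi
    simp [ε, this]
  -- Otherwise `minpoly pb.gen`, of degree `t`, would be the minimal polynomial of an element of a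
  -- field of degree `e < t`.
  have hω : Polynomial.aeval pb'.gen (minpoly (ZMod p) pb.gen) ≠ 0 := fun h0 => by
    have h1 := minpoly.eq_of_irreducible_of_monic (minpoly.irreducible pb.isIntegral_gen) h0
      (minpoly.monic pb.isIntegral_gen)
    have h2 := congrArg Polynomial.natDegree h1
    rw [pb.natDegree_minpoly, pb'.natDegree_minpoly] at h2
    omega
  obtain ⟨c, hc⟩ : ∃ c : GaloisField p e,
      c ∉ Set.range (algebraMap (ZMod p) (GaloisField p e)) := by
    by_contra! hall
    have h1 := Nat.card_le_card_of_surjective _ (Set.range_eq_univ.1 (Set.eq_univ_of_forall hall))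
    rw [GaloisField.card p e (by omega), Nat.card_zmod] at h1
    have h2 := Nat.pow_lt_pow_right (Fact.out : p.Prime).one_lt he
    rw [pow_one] at h2
    omega
  refine ⟨mulMatrix pb pb'.gen ε, ?_, ?_, ?_, ?_, ?_⟩
  · intro i j hij a
    have hne : ε i - ε j ≠ 0 := sub_ne_zero.2 (ε.injective.ne hij)
    have hs : Function.Surjective
        (evalMap pb pb'.gen ∘ₗ LinearMap.mulLeft (ZMod p) (ε i - ε j)) := by
      rw [LinearMap.coe_comp]
      refine (evalMap_surjective pb pb' (by omega)).comp fun y => ⟨(ε i - ε j)⁻¹ * y, ?_⟩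
      rw [LinearMap.mulLeft_apply, mul_inv_cancel_left₀ hne]
    have h := card_fiber p _ hs a
    rw [hfe, hft] at h
    rw [← h]
    refine Nat.card_congr (ε.subtypeEquiv fun s => ?_)
    simp [mulMatrix, sub_mul]
  · rintro i j (h | h) <;> simp [mulMatrix, hε _ h]
  · exact ⟨_, ghCode_mulMatrix_eq_range pb pb'.gen ε⟩
  · rw [kerDim, kerSet_mulMatrix pb pb'.gen hω ε c hc, Submodule.span_coe_eq_restrictScalars,
      Submodule.restrictScalars_self]
    exact finrank_span_singleton fun h => one_ne_zero (congrFun h ⟨0, hpos⟩)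
  · rw [rankC_mulMatrix pb pb'.gen hω ε, hpb]
end
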